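/- arXiv:1912.13501 — 4 statements merged into one kernel-verified Lean document; each statement's English description precedes it below -/
import Mathlib

section
/- (Converse part of Theorem 2, common randomness bound.) In the MM-SPIR model (with all constraints), the entropy of the common randomness satisfies H(S) ≥ P·L / (N−1). -/
open Finset

namespace MMSPIR

variable {Ω : Type} [Fintype Ω]

/-- Probability that the random variable `X` takes the value `v`,
under the weight function `p` on the finite sample space `Ω`. -/
noncomputable def prob (p : Ω → ℝ) {V : Type} [DecidableEq V] (X : Ω → V) (v : V) : ℝ :=
  ∑ ω ∈ Finset.univ.filter (fun ω => X ω = v), p ω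

/-- Shannon entropy of `X`, with logarithm taken to base `q`. -/
noncomputable def ent (q : ℕ) (p : Ω → ℝ) {V : Type} [Fintype V] [DecidableEq V]
    (X : Ω → V) : ℝ :=
  -∑ v : V, prob p X v * Real.logb q (prob p X v)

/-- Conditional entropy `H(X | Y)`, base `q`. -/
noncomputable def cent (q : ℕ) (p : Ω → ℝ) {V W : Type} [Fintype V] [DecidableEq V]
    [Fintype W] [DecidableEq W] (X : Ω → V) (Y : Ω → W) : ℝ :=
  ent q p (fun ω => (X ω, Y ω)) - ent q p Y

/-- Mutual information `I(X ; Y)`, base `q`. -/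
noncomputable def mi (q : ℕ) (p : Ω → ℝ) {V W : Type} [Fintype V] [DecidableEq V]
    [Fintype W] [DecidableEq W] (X : Ω → V) (Y : Ω → W) : ℝ :=
  ent q p X + ent q p Y - ent q p (fun ω => (X ω, Y ω))

/-- Conditional mutual information `I(X ; Y | Z)`, base `q`. -/
noncomputable def cmi (q : ℕ) (p : Ω → ℝ) {U V W : Type} [Fintype U] [DecidableEq U]
    [Fintype V] [DecidableEq V] [Fintype W] [DecidableEq W]
    (X : Ω → U) (Y : Ω → V) (Z : Ω → W) : ℝ :=
  cent q p X Z + cent q p Y Z - cent q p (fun ω => (X ω, Y ω)) Z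

/-- `X` and `Y` have the same distribution. -/
def IdentDist (p : Ω → ℝ) {V : Type} [DecidableEq V] (X Y : Ω → V) : Prop :=
  ∀ v, prob p X v = prob p Y v

/-- `Z` is a function of `X`. -/
def Det {V U : Type} (X : Ω → V) (Z : Ω → U) : Prop :=
  ∀ a b, X a = X b → Z a = Z b

lemma prob_nonneg {p : Ω → ℝ} (hp0 : ∀ ω, 0 ≤ p ω) {V : Type} [DecidableEq V]
    (X : Ω → V) (v : V) : 0 ≤ prob p X v :=
  Finset.sum_nonneg fun ω _ => hp0 ω

lemma le_prob {p : Ω → ℝ} (hp0 : ∀ ω, 0 ≤ p ω) {V : Type} [DecidableEq V]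
    (X : Ω → V) (ω : Ω) : p ω ≤ prob p X (X ω) :=
  Finset.single_le_sum (f := p) (fun a _ => hp0 a) (by simp)

lemma sum_prob_mul (p : Ω → ℝ) {V : Type} [Fintype V] [DecidableEq V]
    (X : Ω → V) (g : V → ℝ) : ∑ v, prob p X v * g v = ∑ ω, p ω * g (X ω) := by
  rw [← Finset.sum_fiberwise (s := Finset.univ) (g := X)]
  refine Finset.sum_congr rfl fun v _ => ?_
  unfold prob
  rw [Finset.sum_mul]
  refine Finset.sum_congr rfl fun ω hω => ?_
  rw [(Finset.mem_filter.1 hω).2]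

lemma ent_eq (q : ℕ) (p : Ω → ℝ) {V : Type} [Fintype V] [DecidableEq V] (X : Ω → V) :
    ent q p X = -∑ ω, p ω * Real.logb q (prob p X (X ω)) := by
  unfold ent
  rw [sum_prob_mul p X (fun v => Real.logb q (prob p X v))]

lemma prob_mono {p : Ω → ℝ} (hp0 : ∀ ω, 0 ≤ p ω) {V U : Type} [DecidableEq V] [DecidableEq U]
    {X : Ω → V} {Z : Ω → U} (h : Det X Z) (ω : Ω) : prob p X (X ω) ≤ prob p Z (Z ω) := by
  refine Finset.sum_le_sum_of_subset_of_nonneg ?_ fun a _ _ => hp0 a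
  intro a ha
  simp only [Finset.mem_filter, Finset.mem_univ, true_and] at ha ⊢
  exact h _ _ ha

lemma ent_mono {q : ℕ} (hq : 2 ≤ q) {p : Ω → ℝ} (hp0 : ∀ ω, 0 ≤ p ω) {V U : Type}
    [Fintype V] [DecidableEq V] [Fintype U] [DecidableEq U]
    {X : Ω → V} {Z : Ω → U} (h : Det X Z) : ent q p Z ≤ ent q p X := by
  rw [ent_eq, ent_eq, neg_le_neg_iff]
  refine Finset.sum_le_sum fun ω _ => ?_
  rcases (hp0 ω).eq_or_lt with h0 | h0
  · simp [← h0]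
  · refine mul_le_mul_of_nonneg_left ?_ (hp0 ω)
    exact Real.logb_le_logb_of_le (by exact_mod_cast hq) (h0.trans_le (le_prob hp0 X ω))
      (prob_mono hp0 h ω)

lemma sum_prob_pair (p : Ω → ℝ) {V U : Type} [Fintype V] [DecidableEq V] [DecidableEq U]
    (X : Ω → V) (Z : Ω → U) (z : U) :
    ∑ x, prob p (fun ω => (X ω, Z ω)) (x, z) = prob p Z z := by
  unfold prob
  rw [← Finset.sum_fiberwise (s := Finset.univ.filter fun ω => Z ω = z) (g := X)]
  refine Finset.sum_congr rfl fun v _ => ?_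
  rw [Finset.filter_filter]
  refine Finset.sum_congr ?_ fun _ _ => rfl
  ext ω
  simp [and_comm]

lemma submod_aux {q : ℕ} (hq : 2 ≤ q) {p : Ω → ℝ} (hp0 : ∀ ω, 0 ≤ p ω) (hp1 : ∑ ω, p ω = 1)
    {V U R : Type}
    [Fintype V] [DecidableEq V] [Fintype U] [DecidableEq U] [Fintype R] [DecidableEq R]
    (X : Ω → V) (Y : Ω → U) (Z : Ω → R) :
    ent q p (fun ω => (X ω, Y ω, Z ω)) + ent q p Z ≤
      ent q p (fun ω => (X ω, Z ω)) + ent q p (fun ω => (Y ω, Z ω)) := by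
  have hlq : 0 < Real.log q := Real.log_pos (by exact_mod_cast hq)
  set a : V × U × R → ℝ := fun v => prob p (fun ω => (X ω, Z ω)) (v.1, v.2.2) with ha
  set b : V × U × R → ℝ := fun v => prob p (fun ω => (Y ω, Z ω)) (v.2.1, v.2.2) with hb
  set c : V × U × R → ℝ := fun v => prob p Z v.2.2 with hc
  set J : Ω → V × U × R := fun ω => (X ω, Y ω, Z ω) with hJ
  have a0 : ∀ v, 0 ≤ a v := fun v => prob_nonneg hp0 _ _
  have b0 : ∀ v, 0 ≤ b v := fun v => prob_nonneg hp0 _ _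
  have c0 : ∀ v, 0 ≤ c v := fun v => prob_nonneg hp0 _ _
  have key : ∑ v, prob p J v * (a v * b v / (prob p J v * c v)) ≤ 1 := by
    have h1 : ∀ v, prob p J v * (a v * b v / (prob p J v * c v)) ≤ a v * b v / c v := by
      intro v
      rcases (prob_nonneg hp0 J v).eq_or_lt with h | h
      · rw [← h]; simp only [zero_mul]
        exact div_nonneg (mul_nonneg (a0 v) (b0 v)) (c0 v)
      · apply le_of_eq
        rw [← mul_div_assoc, mul_div_mul_left _ _ h.ne']
    refine (Finset.sum_le_sum fun v _ => h1 v).trans ?_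
    have h2 : ∑ v, a v * b v / c v = ∑ z, prob p Z z * prob p Z z / prob p Z z := by
      rw [Fintype.sum_prod_type, Finset.sum_comm' (t' := Finset.univ) (s' := fun _ => Finset.univ)
        (by simp), Fintype.sum_prod_type, Finset.sum_comm]
      refine Finset.sum_congr rfl fun z _ => ?_
      simp only [ha, hb, hc]
      simp_rw [← Finset.sum_div, ← Finset.sum_mul, sum_prob_pair, ← Finset.mul_sum, sum_prob_pair]
    rw [h2]
    have h3 : ∑ z, prob p Z z = 1 := by
      have := sum_prob_mul p Z (fun _ => 1)
      simpa [hp1] using this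
    rw [← h3]
    refine Finset.sum_le_sum fun z _ => le_of_eq ?_
    by_cases hz : prob p Z z = 0
    · simp [hz]
    · field_simp
  rw [sum_prob_mul] at key
  rw [ent_eq, ent_eq, ent_eq, ent_eq, ← sub_nonneg]
  have e : ∀ ω, p ω * (Real.logb q (prob p J (J ω)) + Real.logb q (c (J ω))
      - Real.logb q (a (J ω)) - Real.logb q (b (J ω))) ≥
      (p ω - p ω * (a (J ω) * b (J ω) / (prob p J (J ω) * c (J ω)))) / Real.log q := by
    intro ω
    rcases (hp0 ω).eq_or_lt with h0 | h0
    · simp [← h0]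
    have hA : 0 < a (J ω) := h0.trans_le (le_prob hp0 (fun ω => (X ω, Z ω)) ω)
    have hB : 0 < b (J ω) := h0.trans_le (le_prob hp0 (fun ω => (Y ω, Z ω)) ω)
    have hC : 0 < c (J ω) := h0.trans_le (le_prob hp0 Z ω)
    have hD : 0 < prob p J (J ω) := h0.trans_le (le_prob hp0 J ω)
    have hl := Real.log_le_sub_one_of_pos (div_pos (mul_pos hA hB) (mul_pos hD hC))
    rw [Real.log_div (mul_pos hA hB).ne' (mul_pos hD hC).ne', Real.log_mul hA.ne' hB.ne',
      Real.log_mul hD.ne' hC.ne'] at hl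
    unfold Real.logb
    rw [← add_div, ← sub_div, ← sub_div, ← mul_div_assoc, ge_iff_le]
    refine div_le_div_of_nonneg_right ?_ hlq.le
    nlinarith
  have e2 := Finset.sum_le_sum fun ω (_ : ω ∈ Finset.univ) => e ω
  rw [← Finset.sum_div, Finset.sum_sub_distrib, hp1] at e2
  have e3 := (div_nonneg (sub_nonneg.2 key) hlq.le).trans e2
  simp only [mul_sub, mul_add, Finset.sum_sub_distrib, Finset.sum_add_distrib] at e3
  simp only [ha, hb, hc, hJ] at e3
  linarith

lemma submod {q : ℕ} (hq : 2 ≤ q) {p : Ω → ℝ} (hp0 : ∀ ω, 0 ≤ p ω) (hp1 : ∑ ω, p ω = 1)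
    {V U R T : Type} [Fintype V] [DecidableEq V] [Fintype U] [DecidableEq U]
    [Fintype R] [DecidableEq R] [Fintype T] [DecidableEq T]
    (X : Ω → V) (Y : Ω → U) (J : Ω → T) (Z : Ω → R)
    (hXZ : Det X Z) (hYZ : Det Y Z) (hJ : Det (fun ω => (X ω, Y ω)) J) :
    ent q p J + ent q p Z ≤ ent q p X + ent q p Y := by
  have h1 := submod_aux hq hp0 hp1 X Y Z
  have h2 : ent q p J ≤ ent q p (fun ω => (X ω, Y ω, Z ω)) := by
    refine ent_mono hq hp0 fun a b h => hJ a b ?_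
    simp only [Prod.mk.injEq] at h ⊢
    exact ⟨h.1, h.2.1⟩
  have h3 : ent q p (fun ω => (X ω, Z ω)) ≤ ent q p X :=
    ent_mono hq hp0 fun a b h => by simp only [Prod.mk.injEq]; exact ⟨h, hXZ a b h⟩
  have h4 : ent q p (fun ω => (Y ω, Z ω)) ≤ ent q p Y :=
    ent_mono hq hp0 fun a b h => by simp only [Prod.mk.injEq]; exact ⟨h, hYZ a b h⟩
  linarith

lemma ent_unit (q : ℕ) {p : Ω → ℝ} (hp1 : ∑ ω, p ω = 1) :
    ent q p (fun _ => ()) = 0 := by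
  rw [ent_eq]
  simp [prob, hp1]

lemma subadd {q : ℕ} (hq : 2 ≤ q) {p : Ω → ℝ} (hp0 : ∀ ω, 0 ≤ p ω) (hp1 : ∑ ω, p ω = 1)
    {V U T : Type} [Fintype V] [DecidableEq V] [Fintype U] [DecidableEq U]
    [Fintype T] [DecidableEq T]
    (X : Ω → V) (Y : Ω → U) (J : Ω → T)
    (hJ : Det (fun ω => (X ω, Y ω)) J) :
    ent q p J ≤ ent q p X + ent q p Y := by
  have := submod hq hp0 hp1 X Y J (fun _ => ()) (fun _ _ _ => rfl) (fun _ _ _ => rfl) hJ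
  rw [ent_unit q hp1] at this
  linarith

lemma ent_ident {q : ℕ} {p : Ω → ℝ} {V U : Type} [Fintype V] [DecidableEq V]
    [Fintype U] [DecidableEq U] {X Y : Ω → V} (h : IdentDist p X Y) (g : V → U) :
    ent q p (fun ω => g (X ω)) = ent q p (fun ω => g (Y ω)) := by
  have key : ∀ (X : Ω → V) u, prob p (fun ω => g (X ω)) u =
      ∑ v, prob p X v * (if g v = u then 1 else 0) := by
    intro X u
    rw [sum_prob_mul]
    simp [prob, Finset.sum_filter]
  have : ∀ u, prob p (fun ω => g (X ω)) u = prob p (fun ω => g (Y ω)) u := by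
    intro u
    rw [key, key]
    exact Finset.sum_congr rfl fun v _ => by rw [h v]
  unfold ent
  simp only [this]

lemma chain_le {q : ℕ} (hq : 2 ≤ q) {p : Ω → ℝ} (hp0 : ∀ ω, 0 ≤ p ω) (hp1 : ∑ ω, p ω = 1)
    {n : ℕ} {V U : Type} [Fintype V] [DecidableEq V] [Fintype U] [DecidableEq U]
    (X : Fin n → Ω → V) (Y : Ω → U) (c : ℝ)
    (h : ∀ k, ent q p (fun ω => (X k ω, Y ω)) ≤ ent q p Y + c) (T : Finset (Fin n)) :
    ent q p (fun ω => ((fun k : {x : Fin n // x ∈ T} => X k.1 ω), Y ω)) ≤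
      ent q p Y + T.card * c := by
  induction T using Finset.induction_on with
  | empty =>
    simp only [Finset.card_empty, Nat.cast_zero, zero_mul, add_zero]
    refine ent_mono hq hp0 fun a b hab => ?_
    simp [hab, funext_iff]
  | insert k T hk ih =>
    have h1 := submod hq hp0 hp1 (fun ω => (X k ω, Y ω))
      (fun ω => ((fun k : {x : Fin n // x ∈ T} => X k.1 ω), Y ω))
      (fun ω => ((fun k : {x : Fin n // x ∈ insert k T} => X k.1 ω), Y ω)) Y
      (fun a b hab => by simp_all) (fun a b hab => by simp_all)
      (fun a b hab => by simp_all [funext_iff])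
    rw [Finset.card_insert_of_notMem hk]
    push_cast
    linarith [h k]

lemma chain_ge {q : ℕ} (hq : 2 ≤ q) {p : Ω → ℝ} (hp0 : ∀ ω, 0 ≤ p ω) (hp1 : ∑ ω, p ω = 1)
    {n : ℕ} {V U : Type} [Fintype V] [DecidableEq V] [Fintype U] [DecidableEq U]
    (X : Fin n → Ω → V) (Y : Ω → U) (c : ℝ)
    (h : ∀ k, ent q p (fun ω => ((fun i : {x : Fin n // x ∈ Finset.univ.erase k} => X i.1 ω), Y ω))
      + c ≤ ent q p (fun ω => ((fun i => X i ω), Y ω))) (T : Finset (Fin n)) :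
    ent q p Y + T.card * c ≤
      ent q p (fun ω => ((fun k : {x : Fin n // x ∈ T} => X k.1 ω), Y ω)) := by
  induction T using Finset.induction_on with
  | empty =>
    simp only [Finset.card_empty, Nat.cast_zero, zero_mul, add_zero]
    exact ent_mono hq hp0 fun a b hab => by simp_all
  | insert k T hk ih =>
    have h1 := submod hq hp0 hp1
      (fun ω => ((fun i : {x : Fin n // x ∈ Finset.univ.erase k} => X i.1 ω), Y ω))
      (fun ω => ((fun k : {x : Fin n // x ∈ insert k T} => X k.1 ω), Y ω))
      (fun ω => ((fun i => X i ω), Y ω))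
      (fun ω => ((fun k : {x : Fin n // x ∈ T} => X k.1 ω), Y ω))
      (fun a b hab => by
        simp only [Prod.mk.injEq, funext_iff, Subtype.forall, Finset.mem_erase,
          Finset.mem_univ, and_true] at hab ⊢
        exact ⟨fun i hi => hab.1 i (fun e => hk (e ▸ hi)), hab.2⟩)
      (fun a b hab => by simp_all [funext_iff])
      (fun a b hab => by
        simp only [Prod.mk.injEq, funext_iff, Subtype.forall, Finset.mem_erase,
          Finset.mem_univ, and_true, Finset.mem_insert] at hab ⊢
        refine ⟨fun i => ?_, hab.1.2⟩
        by_cases e : i = k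
        · exact hab.2.1 i (Or.inl e)
        · exact hab.1.1 i e)
    rw [Finset.card_insert_of_notMem hk]
    push_cast
    linarith [h k]

theorem common_randomness_converse
    {Ω MT QT AT FT ST : Type}
    [Fintype Ω] [Fintype MT] [DecidableEq MT] [Fintype QT] [DecidableEq QT]
    [Fintype AT] [DecidableEq AT] [Fintype FT] [DecidableEq FT]
    [Fintype ST] [DecidableEq ST]
    (N K P L q : ℕ) (hN : 2 ≤ N) (hK : 2 ≤ K) (hP1 : 1 ≤ P) (hP2 : P ≤ K - 1)
    (hL : 1 ≤ L) (hq : IsPrimePow q)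
    (p : Ω → ℝ) (hp0 : ∀ ω, 0 ≤ p ω) (hp1 : (∑ ω, p ω) = 1)
    (W : Fin K → Ω → MT) (F : Ω → FT) (S : Ω → ST)
    (Q : Finset (Fin K) → Fin N → Ω → QT)
    (A : Finset (Fin K) → Fin N → Ω → AT)
    (hWk : ∀ k, ent q p (W k) = (L : ℝ))
    (hWall : ent q p (fun ω (k : Fin K) => W k ω) = (K : ℝ) * L)
    (hind : ent q p (fun ω => (F ω, S ω, fun k : Fin K => W k ω)) =
      ent q p F + ent q p S + ent q p (fun ω (k : Fin K) => W k ω))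
    (hQdet : ∀ 𝒫₀ : Finset (Fin K), 𝒫₀.card = P →
      cent q p (fun ω (n : Fin N) => Q 𝒫₀ n ω) F = 0)
    (hAdet : ∀ 𝒫₀ : Finset (Fin K), 𝒫₀.card = P → ∀ n : Fin N,
      cent q p (A 𝒫₀ n) (fun ω => (Q 𝒫₀ n ω, (fun k : Fin K => W k ω), S ω)) = 0)
    (hrel : ∀ 𝒫₀ : Finset (Fin K), 𝒫₀.card = P →
      cent q p (fun ω (k : {x : Fin K // x ∈ 𝒫₀}) => W k.1 ω)
        (fun ω => ((fun n : Fin N => A 𝒫₀ n ω), F ω)) = 0)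
    (hupriv : ∀ (n : Fin N) (𝒫₁ 𝒫₂ : Finset (Fin K)), 𝒫₁.card = P → 𝒫₂.card = P →
      IdentDist p
        (fun ω => (Q 𝒫₁ n ω, A 𝒫₁ n ω, (fun k : Fin K => W k ω), S ω))
        (fun ω => (Q 𝒫₂ n ω, A 𝒫₂ n ω, (fun k : Fin K => W k ω), S ω)))
    (hdpriv : ∀ 𝒫₀ : Finset (Fin K), 𝒫₀.card = P →
      mi q p (fun ω (k : {x : Fin K // x ∈ 𝒫₀ᶜ}) => W k.1 ω)
        (fun ω => ((fun n : Fin N => Q 𝒫₀ n ω), (fun n : Fin N => A 𝒫₀ n ω), F ω)) = 0)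
    : (P : ℝ) * L / ((N : ℝ) - 1) ≤ ent q p S := by
  have hq2 : 2 ≤ q := hq.two_le
  -- entropy of subsets of messages
  have hWle : ∀ T : Finset (Fin K),
      ent q p (fun ω (k : {x : Fin K // x ∈ T}) => W k.1 ω) ≤ (T.card : ℝ) * L := by
    intro T
    have h1 := chain_le hq2 hp0 hp1 W (fun _ => ()) (L : ℝ) (fun k => by
      rw [ent_unit q hp1, zero_add, ← hWk k]
      exact ent_mono hq2 hp0 fun a b h => by simp_all) T
    rw [ent_unit q hp1, zero_add] at h1
    refine le_trans (ent_mono hq2 hp0 fun a b h => ?_) h1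
    simp_all [funext_iff]
  have hWge : ∀ T : Finset (Fin K), (T.card : ℝ) * L ≤
      ent q p (fun ω (k : {x : Fin K // x ∈ T}) => W k.1 ω) := by
    intro T
    have h1 := subadd hq2 hp0 hp1 (fun ω (k : {x : Fin K // x ∈ T}) => W k.1 ω)
      (fun ω (k : {x : Fin K // x ∈ Tᶜ}) => W k.1 ω) (fun ω (k : Fin K) => W k ω)
      (fun a b h => by
        simp only [Prod.mk.injEq, funext_iff, Subtype.forall, Finset.mem_compl] at h ⊢
        intro k
        by_cases e : k ∈ T
        · exact h.1 k e
        · exact h.2 k e)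
    have h2 := hWle Tᶜ
    have h3 : (T.card : ℝ) + (Tᶜ.card : ℝ) = K := by
      have := Finset.card_add_card_compl T
      rw [Fintype.card_fin] at this
      exact_mod_cast this
    rw [hWall, ← h3] at h1
    linarith
  -- step 1: each message is fresh given the others and an answer
  have step1 : ∀ (k : Fin K) (T : Finset (Fin K)) (n : Fin N), T.card = P → k ∉ T →
      ent q p (fun ω => ((fun i : {x : Fin K // x ∈ Finset.univ.erase k} => W i.1 ω),
        (A T n ω, Q T n ω))) + L ≤
      ent q p (fun ω => ((fun i => W i ω), (A T n ω, Q T n ω))) := by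
    intro k T n hT hk
    have hd := hdpriv T hT
    have hr := hrel T hT
    unfold mi at hd
    unfold cent at hr
    -- reliability with queries
    have e1 := submod hq2 hp0 hp1
      (fun ω => ((fun k : {x : Fin K // x ∈ T} => W k.1 ω), ((fun n : Fin N => A T n ω), F ω)))
      (fun ω => ((fun n : Fin N => Q T n ω), (fun n : Fin N => A T n ω), F ω))
      (fun ω => ((fun k : {x : Fin K // x ∈ T} => W k.1 ω),
        ((fun n : Fin N => Q T n ω), (fun n : Fin N => A T n ω), F ω)))
      (fun ω => ((fun n : Fin N => A T n ω), F ω))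
      (fun a b h => by simp_all) (fun a b h => by simp_all) (fun a b h => by simp_all)
    have e2 := subadd hq2 hp0 hp1
      (fun ω => ((fun k : {x : Fin K // x ∈ T} => W k.1 ω),
        ((fun n : Fin N => Q T n ω), (fun n : Fin N => A T n ω), F ω)))
      (fun ω (i : {x : Fin K // x ∈ Tᶜ.erase k}) => W i.1 ω)
      (fun ω => ((fun i : {x : Fin K // x ∈ Finset.univ.erase k} => W i.1 ω),
        ((fun n : Fin N => Q T n ω), (fun n : Fin N => A T n ω), F ω)))
      (fun a b h => by
        simp only [Prod.mk.injEq, funext_iff, Subtype.forall, Finset.mem_compl, Finset.mem_erase,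
          Finset.mem_univ, and_true] at h ⊢
        refine ⟨fun i hi => ?_, h.1.2⟩
        by_cases e : i ∈ T
        · exact h.1.1 i e
        · exact h.2 i ⟨hi, e⟩)
    have e3 := hWle (Tᶜ.erase k)
    have e4 := hWge Tᶜ
    have e5 : ((Tᶜ.erase k).card : ℝ) + 1 = (Tᶜ.card : ℝ) := by
      exact_mod_cast Finset.card_erase_add_one (Finset.mem_compl.2 hk)
    have e6 : ent q p (fun ω => ((fun k : {x : Fin K // x ∈ Tᶜ} => W k.1 ω),
        ((fun n : Fin N => Q T n ω), (fun n : Fin N => A T n ω), F ω))) ≤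
        ent q p (fun ω => ((fun i => W i ω),
          ((fun n : Fin N => Q T n ω), (fun n : Fin N => A T n ω), F ω))) :=
      ent_mono hq2 hp0 fun a b h => by simp_all [funext_iff]
    have e7 := submod hq2 hp0 hp1
      (fun ω => ((fun i : {x : Fin K // x ∈ Finset.univ.erase k} => W i.1 ω),
        ((fun n : Fin N => Q T n ω), (fun n : Fin N => A T n ω), F ω)))
      (fun ω => ((fun i => W i ω), (A T n ω, Q T n ω)))
      (fun ω => ((fun i => W i ω),
          ((fun n : Fin N => Q T n ω), (fun n : Fin N => A T n ω), F ω)))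
      (fun ω => ((fun i : {x : Fin K // x ∈ Finset.univ.erase k} => W i.1 ω),
        (A T n ω, Q T n ω)))
      (fun a b h => by simp_all [funext_iff]) (fun a b h => by simp_all [funext_iff])
      (fun a b h => by simp_all [funext_iff])
    rw [← e5] at e4
    linarith
  -- fix a set of size `P`
  obtain ⟨T, -, hT⟩ := Finset.exists_subset_card_eq (s := (Finset.univ : Finset (Fin K)))
    (n := P) (by rw [Finset.card_univ, Fintype.card_fin]; omega)
  have step3 : ∀ n : Fin N, ent q p (fun ω => (A T n ω, Q T n ω)) + (K : ℝ) * L ≤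
      ent q p (fun ω => ((fun i => W i ω), (A T n ω, Q T n ω))) := by
    intro n
    have h1 := chain_ge hq2 hp0 hp1 W (fun ω => (A T n ω, Q T n ω)) (L : ℝ) (fun k => by
      obtain ⟨TT, hTTs, hTT⟩ := Finset.exists_subset_card_eq
        (s := (Finset.univ.erase k : Finset (Fin K)))
        (n := P) (by
          rw [Finset.card_erase_of_mem (Finset.mem_univ _), Finset.card_univ, Fintype.card_fin]
          exact hP2)
      have h2 := step1 k TT n hTT (fun h => by simpa using hTTs h)
      have h3 := ent_ident (q := q) (hupriv n T TT hT hTT)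
        (fun v => ((fun i : {x : Fin K // x ∈ Finset.univ.erase k} => v.2.2.1 i.1), (v.2.1, v.1)))
      have h4 := ent_ident (q := q) (hupriv n T TT hT hTT)
        (fun v => (v.2.2.1, (v.2.1, v.1)))
      linarith) Finset.univ
    rw [Finset.card_univ, Fintype.card_fin] at h1
    refine h1.trans (ent_mono hq2 hp0 fun a b h => ?_)
    simp_all [funext_iff]
  have hQ := hQdet T hT
  unfold cent at hQ
  have hQn : ∀ n, ent q p (fun ω => (F ω, Q T n ω)) ≤ ent q p F := by
    intro n
    have : ent q p (fun ω => (F ω, Q T n ω)) ≤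
        ent q p (fun ω => ((fun n : Fin N => Q T n ω), F ω)) :=
      ent_mono hq2 hp0 fun a b h => by simp_all [funext_iff]
    linarith
  have hdetA : ∀ n, ent q p (fun ω => ((fun i => W i ω), A T n ω, Q T n ω, S ω)) ≤
      ent q p (fun ω => (Q T n ω, (fun k : Fin K => W k ω), S ω)) := by
    intro n
    have h1 := hAdet T hT n
    unfold cent at h1
    have : ent q p (fun ω => ((fun i => W i ω), A T n ω, Q T n ω, S ω)) ≤
        ent q p (fun ω => (A T n ω, (Q T n ω, (fun k : Fin K => W k ω), S ω))) :=
      ent_mono hq2 hp0 fun a b h => by simp_all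
    linarith
  have hQWS : ∀ n, ent q p (fun ω => (Q T n ω, (fun k : Fin K => W k ω), S ω)) ≤
      ent q p (Q T n) + (K : ℝ) * L + ent q p S := by
    intro n
    have h1 := subadd hq2 hp0 hp1 (fun ω (k : Fin K) => W k ω) S
      (fun ω => ((fun k : Fin K => W k ω), S ω)) (fun a b h => by simp_all)
    have h2 := subadd hq2 hp0 hp1 (Q T n) (fun ω => ((fun k : Fin K => W k ω), S ω))
      (fun ω => (Q T n ω, (fun k : Fin K => W k ω), S ω)) (fun a b h => by simp_all)
    linarith
  -- step 4: each answer has conditional entropy at most that of `S`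
  have step4 : ∀ n, ent q p (fun ω => (A T n ω, Q T n ω)) ≤ ent q p (Q T n) + ent q p S := by
    intro n
    have h1 := step3 n
    have h2 : ent q p (fun ω => ((fun i => W i ω), (A T n ω, Q T n ω))) ≤
        ent q p (fun ω => ((fun i => W i ω), A T n ω, Q T n ω, S ω)) :=
      ent_mono hq2 hp0 fun a b h => by simp_all
    linarith [hdetA n, hQWS n]
  have hAFn : ∀ n, ent q p (fun ω => (A T n ω, F ω)) + ent q p (Q T n) ≤
      ent q p F + ent q p (fun ω => (A T n ω, Q T n ω)) := by
    intro n
    have h1 := submod hq2 hp0 hp1 (fun ω => (F ω, Q T n ω)) (fun ω => (A T n ω, Q T n ω))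
      (fun ω => (A T n ω, F ω)) (Q T n) (fun a b h => by simp_all) (fun a b h => by simp_all)
      (fun a b h => by simp_all)
    linarith [hQn n]
  -- step 5
  let n0 : Fin N := ⟨0, by omega⟩
  have up := chain_le hq2 hp0 hp1 (fun n => A T n) (fun ω => (A T n0 ω, F ω)) (ent q p S)
    (fun m => by
      have h1 := submod hq2 hp0 hp1 (fun ω => (A T m ω, F ω)) (fun ω => (A T n0 ω, F ω))
        (fun ω => (A T m ω, (A T n0 ω, F ω))) F (fun a b h => by simp_all)
        (fun a b h => by simp_all) (fun a b h => by simp_all)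
      linarith [hAFn m, step4 m]) (Finset.univ.erase n0)
  have hcard : ((Finset.univ.erase n0).card : ℝ) = (N : ℝ) - 1 := by
    rw [Finset.card_erase_of_mem (Finset.mem_univ _), Finset.card_univ, Fintype.card_fin,
      Nat.cast_sub (by omega)]
    simp
  rw [hcard] at up
  have up2 : ent q p (fun ω => ((fun n : Fin N => A T n ω), F ω)) ≤
      ent q p (fun ω => (A T n0 ω, F ω)) + ((N : ℝ) - 1) * ent q p S := by
    refine le_trans (ent_mono hq2 hp0 fun a b h => ?_) up
    simp only [Prod.mk.injEq, funext_iff, Subtype.forall, Finset.mem_erase,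
      Finset.mem_univ, and_true] at h ⊢
    refine ⟨fun i => ?_, h.2.2⟩
    by_cases e : i = n0
    · rw [e]; exact h.2.1
    · exact h.1 i e
  have hr := hrel T hT
  unfold cent at hr
  have low1 : ent q p (fun ω => ((fun k : {x : Fin K // x ∈ T} => W k.1 ω), (A T n0 ω, F ω))) ≤
      ent q p (fun ω => ((fun k : {x : Fin K // x ∈ T} => W k.1 ω),
        ((fun n : Fin N => A T n ω), F ω))) :=
    ent_mono hq2 hp0 fun a b h => by simp_all [funext_iff]
  have low2 := subadd hq2 hp0 hp1
    (fun ω => ((fun k : {x : Fin K // x ∈ T} => W k.1 ω), (A T n0 ω, F ω)))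
    (fun ω (k : {x : Fin K // x ∈ Tᶜ}) => W k.1 ω)
    (fun ω => ((fun k : Fin K => W k ω), (A T n0 ω, F ω)))
    (fun a b h => by
      simp only [Prod.mk.injEq, funext_iff, Subtype.forall, Finset.mem_compl] at h ⊢
      refine ⟨fun k => ?_, h.1.2⟩
      by_cases e : k ∈ T
      · exact h.1.1 k e
      · exact h.2 k e)
  have low3 := submod hq2 hp0 hp1 (fun ω => ((fun k : Fin K => W k ω), (A T n0 ω, F ω)))
    (fun ω => (F ω, Q T n0 ω))
    (fun ω => ((fun k : Fin K => W k ω), A T n0 ω, F ω, Q T n0 ω)) F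
    (fun a b h => by simp_all) (fun a b h => by simp_all) (fun a b h => by simp_all)
  have low4 := submod hq2 hp0 hp1
    (fun ω => ((fun k : Fin K => W k ω), A T n0 ω, F ω, Q T n0 ω))
    (fun ω => ((fun i => W i ω), A T n0 ω, Q T n0 ω, S ω))
    (fun ω => (F ω, S ω, fun k : Fin K => W k ω))
    (fun ω => ((fun i => W i ω), (A T n0 ω, Q T n0 ω)))
    (fun a b h => by simp_all) (fun a b h => by simp_all) (fun a b h => by simp_all)
  have h3 : (T.card : ℝ) + (Tᶜ.card : ℝ) = K := by
    have := Finset.card_add_card_compl T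
    rw [Fintype.card_fin] at this
    exact_mod_cast this
  have hTc := hWle Tᶜ
  have h4 : (Tᶜ.card : ℝ) * L = K * L - P * L := by
    rw [← h3, hT]; ring
  have hN1 : (0 : ℝ) < (N : ℝ) - 1 := by
    have : (2 : ℝ) ≤ N := by exact_mod_cast hN
    linarith
  rw [div_le_iff₀ hN1]
  linarith [hdetA n0, hQWS n0, hAFn n0, hQn n0, step3 n0]

end MMSPIR
end

section
/- (Algebraic identity underlying Lemma 8: the achievable scheme has rate 1 − 1/N.) Let N ≥ 2, K ≥ 2, and P be integers with 1 ≤ P ≤ K−1, and let r be a positive real number satisfying (1 + 1/r)^P = N. Define D1 = Σ_{k=1}^{K} C(K,k)·r^{K−P−k}, U1 = Σ_{k=1}^{K−P} C(K−P,k)·r^{K−P−k}, and D2 = (1/(N−1))·Σ_{k=1}^{P} C(P,k)·r^{K−P−k} (integer powers of r, possibly negative). Then D2 = r^{K−P} and D1 = N·U1 + (N−1)·D2; consequently (D1 − U1)/(D1 + D2) = 1 − 1/N. -/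
open Finset

namespace MMSPIR

variable {Ω : Type} [Fintype Ω]

/-- Truncated binomial theorem with negative powers. -/
lemma sum_choose_zpow (r : ℝ) (hr : 0 < r) (a : ℤ) (m : ℕ) :
    ∑ k ∈ Finset.Icc 1 m, (m.choose k : ℝ) * r ^ (a - (k : ℤ)) =
      r ^ a * ((1 + 1 / r) ^ m - 1) := by
  have h : (1 + 1 / r) ^ m = 1 + ∑ k ∈ Finset.Icc 1 m, (m.choose k : ℝ) * (1 / r) ^ k := by
    rw [add_comm (1 : ℝ) (1 / r), add_pow, Finset.range_eq_Ico,
      Finset.sum_eq_sum_Ico_succ_bot (Nat.succ_pos m)]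
    have e : Finset.Ico (0 + 1) (m + 1) = Finset.Icc 1 m := by
      ext x
      simp only [Finset.mem_Ico, Finset.mem_Icc]
      omega
    rw [e]
    simp only [one_pow, mul_one, pow_zero, Nat.choose_zero_right, Nat.cast_one]
    congr 1
    exact Finset.sum_congr rfl fun k _ => mul_comm _ _
  rw [h, add_sub_cancel_left, Finset.mul_sum]
  refine Finset.sum_congr rfl fun k _ => ?_
  rw [zpow_sub₀ hr.ne', zpow_natCast, one_div, inv_pow]
  ring

theorem achievable_rate_identity
    (N K P : ℕ) (hN : 2 ≤ N) (hK : 2 ≤ K) (hP1 : 1 ≤ P) (hP2 : P ≤ K - 1)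
    (r : ℝ) (hr : 0 < r) (hroot : (1 + 1 / r) ^ P = (N : ℝ))
    (D1 U1 D2 : ℝ)
    (hD1 : D1 = ∑ k ∈ Finset.Icc 1 K, (K.choose k : ℝ) * r ^ ((K : ℤ) - P - k))
    (hU1 : U1 = ∑ k ∈ Finset.Icc 1 (K - P), ((K - P).choose k : ℝ) * r ^ ((K : ℤ) - P - k))
    (hD2 : D2 = (1 / ((N : ℝ) - 1)) * ∑ k ∈ Finset.Icc 1 P, (P.choose k : ℝ) * r ^ ((K : ℤ) - P - k))
    : D2 = r ^ ((K : ℤ) - P) ∧ D1 = (N : ℝ) * U1 + ((N : ℝ) - 1) * D2 ∧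
      (D1 - U1) / (D1 + D2) = 1 - 1 / (N : ℝ) := by
  have hN' : (2 : ℝ) ≤ N := by exact_mod_cast hN
  have hN1 : (N : ℝ) - 1 ≠ 0 := by linarith
  have hN0 : (N : ℝ) ≠ 0 := by linarith
  rw [sum_choose_zpow r hr] at hD1 hU1 hD2
  have hKP : K = P + (K - P) := by omega
  have hA : 0 < r ^ ((K : ℤ) - P) := zpow_pos hr _
  have hq : 0 < (1 + 1 / r) ^ (K - P) := by positivity
  have hKpow : (1 + 1 / r) ^ K = N * (1 + 1 / r) ^ (K - P) := by
    rw [← hroot, ← pow_add, ← hKP]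
  rw [hKpow] at hD1
  rw [hroot] at hD2
  generalize r ^ ((K : ℤ) - P) = A at *
  generalize (1 + 1 / r) ^ (K - P) = q at *
  have hD2' : D2 = A := by
    rw [hD2]
    field_simp
  refine ⟨hD2', ?_, ?_⟩
  · rw [hD2', hD1, hU1]
    ring
  · have h1 : D1 + D2 = A * N * q := by
      rw [hD2', hD1]
      ring
    have h2 : D1 - U1 = A * (N - 1) * q := by
      rw [hU1, hD1]
      ring
    rw [h1, h2]
    have := hA.ne'
    have := hq.ne'
    field_simp

end MMSPIR
end

section
/- (Algebraic identity underlying Lemma 9: the achievable scheme uses exactly the minimal common randomness.) Let N ≥ 2, K ≥ 2, and P be integers with 1 ≤ P ≤ K−1, and let r be a positive real number satisfying (1 + 1/r)^P = N. Define D1 = Σ_{k=1}^{K} C(K,k)·r^{K−P−k}, U1 = Σ_{k=1}^{K−P} C(K−P,k)·r^{K−P−k}, and D2 = (1/(N−1))·Σ_{k=1}^{P} C(P,k)·r^{K−P−k} (integer powers of r, possibly negative). Then U1 + D2 = (D1 − U1)/(N−1); i.e., with message length L = (D1 − U1)/P, the total amount of common randomness of the scheme, U1 + D2, equals P·L/(N−1).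 -/
open Finset

namespace MMSPIR

variable {Ω : Type} [Fintype Ω]

theorem achievable_common_randomness_identity
    (N K P : ℕ) (hN : 2 ≤ N) (hK : 2 ≤ K) (hP1 : 1 ≤ P) (hP2 : P ≤ K - 1)
    (r : ℝ) (hr : 0 < r) (hroot : (1 + 1 / r) ^ P = (N : ℝ))
    (D1 U1 D2 : ℝ)
    (hD1 : D1 = ∑ k ∈ Finset.Icc 1 K, (K.choose k : ℝ) * r ^ ((K : ℤ) - P - k))
    (hU1 : U1 = ∑ k ∈ Finset.Icc 1 (K - P), ((K - P).choose k : ℝ) * r ^ ((K : ℤ) - P - k))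
    (hD2 : D2 = (1 / ((N : ℝ) - 1)) * ∑ k ∈ Finset.Icc 1 P, (P.choose k : ℝ) * r ^ ((K : ℤ) - P - k))
    : U1 + D2 = (D1 - U1) / ((N : ℝ) - 1) := by
  have hr0 : r ≠ 0 := hr.ne'
  have key : ∀ m : ℕ, ∑ k ∈ Finset.Icc 1 m, (m.choose k : ℝ) * r ^ ((K : ℤ) - P - k)
      = r ^ ((K : ℤ) - P) * ((1 + 1 / r) ^ m - 1) := by
    intro m
    have h1 : (1 + 1 / r) ^ m = ∑ k ∈ Finset.range (m + 1), (m.choose k : ℝ) * (1 / r) ^ k := by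
      rw [add_comm, add_pow]
      refine Finset.sum_congr rfl fun k _ => ?_
      rw [one_pow]
      ring
    have h2 : ∑ k ∈ Finset.Icc 1 m, (m.choose k : ℝ) * (1 / r) ^ k = (1 + 1 / r) ^ m - 1 := by
      rw [h1, Finset.range_eq_Ico, Finset.sum_eq_sum_Ico_succ_bot (Nat.succ_pos m)]
      have : Finset.Icc 1 m = Finset.Ico (0 + 1) (m + 1) := by
        ext k
        simp only [Finset.mem_Icc, Finset.mem_Ico]
        omega
      rw [this]
      simp
    rw [← h2, Finset.mul_sum]
    refine Finset.sum_congr rfl fun k _ => ?_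
    rw [zpow_sub₀ hr0 _ (k : ℤ), zpow_natCast, one_div, inv_pow]
    ring
  rw [key] at hD1 hU1 hD2
  have hx : (1 + 1 / r) ^ K = (1 + 1 / r) ^ (K - P) * (N : ℝ) := by
    rw [← hroot, ← pow_add]
    congr 1
    omega
  have hN1 : (N : ℝ) - 1 ≠ 0 := by
    have : (2 : ℝ) ≤ N := by exact_mod_cast hN
    linarith
  rw [hroot] at hD2
  rw [hx] at hD1
  rw [hD1, hU1, hD2, eq_div_iff hN1]
  field_simp
  ring

end MMSPIR
end

section
/- (Achievability part of Theorem 2.) For all integers N ≥ 2, K ≥ 2, and P with 1 ≤ P ≤ K−1, and for any prime power q, there exist a positive integer L and random variables on a finite probability space — messages W_1,…,W_K that are i.i.d. uniform on F_q^L, a user-randomness F, a common randomness S, and for every size-P subset 𝒫 of {1,…,K} and every n ∈ {1,…,N} a query Q_n^{[𝒫]} and an answer A_n^{[𝒫]} — satisfying the independence, query-determinism, answer-determinism, reliability, user-privacy, and database-privacy constraints of the MM-SPIR model, such that H(S) = P·L/(N−1) and, for every size-P subset 𝒫, Σ_{n=1}^{N} H(A_n^{[𝒫]}) = N·P·L/(N−1);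 i.e., the sum retrieval rate P·L / Σ_{n=1}^{N} H(A_n^{[𝒫]}) equals 1 − 1/N. -/
open Finset

namespace MMSPIR

variable {Ω : Type} [Fintype Ω]

/-- A (candidate) MM-SPIR scheme: a finite sample space together with message,
user-randomness, common-randomness, query and answer random variables, where the
`K` messages take values in `Fin L → Fin q` (strings of `L` symbols from a
`q`-element field). -/
structure Scheme (N K L q : ℕ) where
  Ω : Type
  [fintΩ : Fintype Ω]
  QT : Type
  [fintQT : Fintype QT]
  [decQT : DecidableEq QT]
  AT : Type
  [fintAT : Fintype AT]
  [decAT : DecidableEq AT]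
  FT : Type
  [fintFT : Fintype FT]
  [decFT : DecidableEq FT]
  ST : Type
  [fintST : Fintype ST]
  [decST : DecidableEq ST]
  p : Ω → ℝ
  W : Fin K → Ω → (Fin L → Fin q)
  F : Ω → FT
  S : Ω → ST
  Q : Finset (Fin K) → Fin N → Ω → QT
  A : Finset (Fin K) → Fin N → Ω → AT

attribute [instance] Scheme.fintΩ Scheme.fintQT Scheme.decQT Scheme.fintAT Scheme.decAT
  Scheme.fintFT Scheme.decFT Scheme.fintST Scheme.decST

open scoped Fin.CommRing

/-- `X` is uniformly distributed. -/
def Unif (p : Ω → ℝ) {V : Type} [Fintype V] [DecidableEq V] (X : Ω → V) : Prop :=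
  ∀ v, prob p X v = 1 / (Fintype.card V : ℝ)

theorem ent_inj (q : ℕ) (p : Ω → ℝ) {V W : Type} [Fintype V] [DecidableEq V]
    [Fintype W] [DecidableEq W] (X : Ω → V) (f : V → W) (hf : Function.Injective f) :
    ent q p (fun ω => f (X ω)) = ent q p X := by
  unfold ent
  congr 1
  symm
  apply Fintype.sum_of_injective f hf
  · intro i hi
    have : prob p (fun ω => f (X ω)) i = 0 := by
      unfold prob
      apply Finset.sum_eq_zero
      intro ω hω
      simp only [Finset.mem_filter] at hω
      exact absurd ⟨_, hω.2⟩ hi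
    rw [this]; simp
  · intro i
    have : prob p (fun ω => f (X ω)) (f i) = prob p X i := by
      unfold prob
      simp only [hf.eq_iff]
    rw [this]

theorem cent_zero (q : ℕ) (p : Ω → ℝ) {V W : Type} [Fintype V] [DecidableEq V]
    [Fintype W] [DecidableEq W] (X : Ω → V) (Y : Ω → W) (g : W → V)
    (h : ∀ ω, X ω = g (Y ω)) : cent q p X Y = 0 := by
  unfold cent
  rw [sub_eq_zero]
  have : (fun ω => (X ω, Y ω)) = fun ω => (fun y => (g y, y)) (Y ω) := by
    funext ω; simp [h]
  rw [this]
  exact ent_inj q p Y (fun y => (g y, y)) (fun a b hab => (Prod.ext_iff.1 hab).2)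

theorem ent_unif (q : ℕ) (p : Ω → ℝ) {V : Type} [Fintype V] [DecidableEq V] [Nonempty V]
    (X : Ω → V) (h : Unif p X) : ent q p X = Real.logb q (Fintype.card V) := by
  unfold ent
  have hc : (Fintype.card V : ℝ) ≠ 0 := by exact_mod_cast Fintype.card_ne_zero
  simp only [h _, Finset.sum_const, Finset.card_univ, nsmul_eq_mul, one_div, Real.logb_inv]
  field_simp

theorem unif_fst (p : Ω → ℝ) {V U : Type} [Fintype V] [DecidableEq V] [Fintype U] [DecidableEq U]
    [Nonempty U] (X : Ω → V) (Y : Ω → U) (h : Unif p (fun ω => (X ω, Y ω))) : Unif p X := by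
  intro v
  have h1 : prob p X v = ∑ u : U, prob p (fun ω => (X ω, Y ω)) (v, u) := by
    unfold prob
    rw [← Finset.sum_fiberwise _ Y]
    apply Finset.sum_congr rfl
    intro u _
    rw [Finset.filter_filter]
    simp only [Prod.mk.injEq]
  rw [h1]
  have hc : (Fintype.card U : ℝ) ≠ 0 := by exact_mod_cast Fintype.card_ne_zero
  simp only [h _, Finset.sum_const, Finset.card_univ, nsmul_eq_mul, Fintype.card_prod]
  push_cast
  by_cases hv : (Fintype.card V : ℝ) = 0
  · simp [hv]
  field_simp

theorem unif_snd (p : Ω → ℝ) {V U : Type} [Fintype V] [DecidableEq V] [Fintype U] [DecidableEq U]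
    [Nonempty V] (X : Ω → V) (Y : Ω → U) (h : Unif p (fun ω => (X ω, Y ω))) : Unif p Y := by
  apply unif_fst p Y X
  intro v
  have := h (v.2, v.1)
  rw [Fintype.card_prod] at this ⊢
  rw [mul_comm, ← this]
  unfold prob
  congr 1
  ext ω
  simp only [Finset.mem_filter, Prod.ext_iff, and_comm]

theorem unif_inj {V : Type} [Fintype V] {_ : DecidableEq V} (X : Ω → V)
    (h : Function.Injective X) (hc : Fintype.card Ω = Fintype.card V) :
    Unif (fun _ : Ω => 1 / (Fintype.card Ω : ℝ)) X := by
  intro v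
  obtain ⟨ω, rfl⟩ := ((Fintype.bijective_iff_injective_and_card X).2 ⟨h, hc⟩).2 v
  unfold prob
  have e : Finset.univ.filter (fun ω' => X ω' = X ω) = {ω} := by
    ext ω'
    simp [h.eq_iff]
  rw [e, Finset.sum_singleton, hc]

theorem prob_comp_inj (c : ℝ) {V : Type} {_ : DecidableEq V} (G : Ω → V) (e : Ω → Ω)
    (he : Function.Injective e) (v : V) :
    prob (fun _ => c) (fun ω => G (e ω)) v = prob (fun _ => c) G v := by
  unfold prob
  rw [Finset.sum_filter, Finset.sum_filter]
  exact Function.Bijective.sum_comp (Finite.injective_iff_bijective.1 he)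
    (fun ω => if G ω = v then c else 0)

theorem mi_zero (q : ℕ) (p : Ω → ℝ) {U V W : Type} {_ : Fintype U} {_ : DecidableEq U}
    [Fintype V] [DecidableEq V] {_ : Fintype W} {_ : DecidableEq W} [Nonempty U] [Nonempty V]
    {fUV : Fintype (U × V)} {dUV : DecidableEq (U × V)}
    (X : Ω → U) (Z : Ω → W) (Y : Ω → V) (g : V → W) (hg : Function.Injective g)
    (hZ : ∀ ω, Z ω = g (Y ω)) (h₀ : @Unif Ω _ p _ fUV dUV (fun ω => (X ω, Y ω))) : mi q p X Z = 0 := by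
  have h : @Unif Ω _ p _ (instFintypeProd U V) instDecidableEqProd
      (fun ω => (X ω, Y ω)) := by convert h₀
  clear h₀
  clear fUV dUV
  obtain rfl : Z = fun ω => g (Y ω) := funext hZ
  unfold mi
  have h2 : ent q p (fun ω => (X ω, g (Y ω))) = ent q p (fun ω => (X ω, Y ω)) :=
    ent_inj q p (fun ω => (X ω, Y ω)) (Prod.map id g) (Function.injective_id.prodMap hg)
  rw [h2, ent_inj q p Y g hg, ent_unif q p _ h, ent_unif q p X (unif_fst p X Y h),
    ent_unif q p Y (unif_snd p X Y h), Fintype.card_prod, Nat.cast_mul, Real.logb_mul]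
  · ring
  · exact_mod_cast Fintype.card_ne_zero
  · exact_mod_cast Fintype.card_ne_zero

section scheme

variable {L K P q : ℕ} [NeZero q]

/-- Queries: `P` random vectors, shifted by unit vectors for servers other than the first. -/
def qry (ι : Fin P → Fin K) (n : Fin (L + 1)) (h : Fin P → Fin K → Fin L → Fin q) :
    Fin P → Fin K → Fin L → Fin q :=
  fun j k l => h j k l + if k = ι j ∧ n = l.succ then 1 else 0

/-- Answers: inner products masked by the common randomness. -/
def ans (Q : Fin P → Fin K → Fin L → Fin q) (w : Fin K → Fin L → Fin q) (s : Fin P → Fin q) :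
    Fin P → Fin q :=
  fun j => (∑ k, ∑ l, Q j k l * w k l) + s j

theorem qry_inj (ι : Fin P → Fin K) (n : Fin (L + 1)) :
    Function.Injective (qry (q := q) ι n) := by
  intro a b hab
  funext j k l
  have := congrFun (congrFun (congrFun hab j) k) l
  simpa [qry] using this

theorem ans_inj (Q : Fin P → Fin K → Fin L → Fin q) (w : Fin K → Fin L → Fin q) :
    Function.Injective (ans Q w) := by
  intro a b hab
  funext j
  have := congrFun hab j
  simpa [ans] using this

theorem ans_qry (ι : Fin P → Fin K) (n : Fin (L + 1)) (h : Fin P → Fin K → Fin L → Fin q)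
    (w : Fin K → Fin L → Fin q) (s : Fin P → Fin q) (j : Fin P) :
    ans (qry ι n h) w s j = ans (qry ι 0 h) w s j +
      Fin.cases (motive := fun _ => Fin q) 0 (fun l => w (ι j) l) n := by
  have h0 : qry ι 0 h = h := by
    funext j k l
    simp [qry, (Fin.succ_ne_zero l).symm]
  rw [h0]
  induction n using Fin.cases with
  | zero => simp [h0]
  | succ l =>
    simp only [ans, qry, add_mul, Finset.sum_add_distrib, Fin.succ_inj, Fin.cases_succ]
    have : ∑ k, ∑ l', (if k = ι j ∧ l = l' then (1 : Fin q) else 0) * w k l' = w (ι j) l := by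
      rw [Finset.sum_eq_single (ι j), Finset.sum_eq_single l]
      · simp
      · intro b _ hb; simp [Ne.symm hb]
      · simp
      · intro b _ hb; simp [hb]
      · simp
    rw [this]
    ring

/-- An enumeration of the desired messages. -/
noncomputable def idx (hK : 0 < K) (s : Finset (Fin K)) : Fin P → Fin K :=
  if h : s.card = P then s.orderEmbOfFin h else fun _ => ⟨0, hK⟩

theorem idx_mem (hK : 0 < K) (s : Finset (Fin K)) (h : s.card = P) (j : Fin P) :
    idx hK s j ∈ s := by
  simp [idx, h]

theorem idx_surj (hK : 0 < K) (s : Finset (Fin K)) (h : s.card = P) (k : Fin K) (hk : k ∈ s) :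
    ∃ j : Fin P, idx hK s j = k := by
  have : k ∈ Set.range (s.orderEmbOfFin h) := by simpa using hk
  obtain ⟨j, hj⟩ := this
  exact ⟨j, by simpa [idx, h] using hj⟩

/-- The sample space. -/
abbrev Sp (L K P q : ℕ) : Type :=
  (Fin P → Fin K → Fin L → Fin q) × (Fin P → Fin q) × (Fin K → Fin L → Fin q)

/-- The scheme. -/
noncomputable def sch (L K P q : ℕ) [NeZero q] (hK : 0 < K) : Scheme (L + 1) K L q where
  Ω := Sp L K P q
  QT := Fin P → Fin K → Fin L → Fin q
  AT := Fin P → Fin q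
  FT := Fin P → Fin K → Fin L → Fin q
  ST := Fin P → Fin q
  p := fun _ => 1 / (Fintype.card (Sp L K P q) : ℝ)
  W := fun k ω => ω.2.2 k
  F := fun ω => ω.1
  S := fun ω => ω.2.1
  Q := fun s n ω => qry (idx hK s) n ω.1
  A := fun s n ω => ans (qry (idx hK s) n ω.1) ω.2.2 ω.2.1

theorem sch_unif_FSW (L K P q : ℕ) [NeZero q] :
    Unif (fun _ : Sp L K P q => 1 / (Fintype.card (Sp L K P q) : ℝ))
      (fun ω => (ω.1, ω.2.1, ω.2.2)) :=
  unif_inj _ (fun _ _ hab => hab) rfl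

theorem sch_unif_A (L K P q : ℕ) [NeZero q] (ι : Fin P → Fin K) (n : Fin (L + 1)) :
    Unif (fun _ : Sp L K P q => 1 / (Fintype.card (Sp L K P q) : ℝ))
      (fun ω => ans (qry ι n ω.1) ω.2.2 ω.2.1) := by
  refine unif_fst _ _ (fun ω => (ω.1, ω.2.2)) (unif_inj _ ?_ ?_)
  · rintro ⟨f, s, w⟩ ⟨f', s', w'⟩ hab
    simp only [Prod.mk.injEq] at hab
    obtain ⟨h1, rfl, rfl⟩ := hab
    rw [ans_inj _ _ h1]
  · simp only [Fintype.card_prod]; ring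

theorem sch_unif_joint (L K P q : ℕ) [NeZero q] (ι : Fin P → Fin K) (T : Finset (Fin K)) :
    Unif (fun _ : Sp L K P q => 1 / (Fintype.card (Sp L K P q) : ℝ))
      (fun ω => ((fun k : {x // x ∈ Tᶜ} => ω.2.2 k.1), (ω.1, ans (qry ι 0 ω.1) ω.2.2 ω.2.1,
        (fun k : {x // x ∈ T} => ω.2.2 k.1)))) := by
  refine unif_inj _ ?_ ?_
  · rintro ⟨f, s, w⟩ ⟨f', s', w'⟩ hab
    simp only [Prod.mk.injEq] at hab
    obtain ⟨h1, rfl, h3, h4⟩ := hab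
    obtain rfl : w = w' := by
      funext k
      by_cases hk : k ∈ T
      · exact congrFun h4 ⟨k, hk⟩
      · exact congrFun h1 ⟨k, Finset.mem_compl.2 hk⟩
    rw [ans_inj _ _ h3]
  · have hT : T.card ≤ K := by simpa using Finset.card_le_univ T
    have e : (q ^ L) ^ K = (q ^ L) ^ (K - T.card) * (q ^ L) ^ T.card := by
      rw [← pow_add, Nat.sub_add_cancel hT]
    simp only [Fintype.card_prod, Fintype.card_pi, Finset.prod_const, Finset.card_univ,
      Fintype.card_fin, Fintype.card_coe, Finset.card_compl, e]
    ring

end scheme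

theorem mmspir_achievability
    (N K P q : ℕ) (hN : 2 ≤ N) (hK : 2 ≤ K) (hP1 : 1 ≤ P) (hP2 : P ≤ K - 1)
    (hq : IsPrimePow q)
    : ∃ L : ℕ, 1 ≤ L ∧ ∃ M : Scheme N K L q,
      (∀ ω, 0 ≤ M.p ω) ∧ ((∑ ω, M.p ω) = 1) ∧
      (∀ v : Fin K → Fin L → Fin q,
        prob M.p (fun ω (k : Fin K) => M.W k ω) v = 1 / (q : ℝ) ^ (K * L)) ∧
      (ent q M.p (fun ω => (M.F ω, M.S ω, fun k : Fin K => M.W k ω)) =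
        ent q M.p M.F + ent q M.p M.S + ent q M.p (fun ω (k : Fin K) => M.W k ω)) ∧
      (∀ 𝒫₀ : Finset (Fin K), 𝒫₀.card = P →
        cent q M.p (fun ω (n : Fin N) => M.Q 𝒫₀ n ω) M.F = 0) ∧
      (∀ 𝒫₀ : Finset (Fin K), 𝒫₀.card = P → ∀ n : Fin N,
        cent q M.p (M.A 𝒫₀ n)
          (fun ω => (M.Q 𝒫₀ n ω, (fun k : Fin K => M.W k ω), M.S ω)) = 0) ∧
      (∀ 𝒫₀ : Finset (Fin K), 𝒫₀.card = P →
        cent q M.p (fun ω (k : {x : Fin K // x ∈ 𝒫₀}) => M.W k.1 ω)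
          (fun ω => ((fun n : Fin N => M.A 𝒫₀ n ω), M.F ω)) = 0) ∧
      (∀ (n : Fin N) (𝒫₁ 𝒫₂ : Finset (Fin K)), 𝒫₁.card = P → 𝒫₂.card = P →
        IdentDist M.p
          (fun ω => (M.Q 𝒫₁ n ω, M.A 𝒫₁ n ω, (fun k : Fin K => M.W k ω), M.S ω))
          (fun ω => (M.Q 𝒫₂ n ω, M.A 𝒫₂ n ω, (fun k : Fin K => M.W k ω), M.S ω))) ∧
      (∀ 𝒫₀ : Finset (Fin K), 𝒫₀.card = P →
        mi q M.p (fun ω (k : {x : Fin K // x ∈ 𝒫₀ᶜ}) => M.W k.1 ω)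
          (fun ω => ((fun n : Fin N => M.Q 𝒫₀ n ω), (fun n : Fin N => M.A 𝒫₀ n ω), M.F ω)) = 0) ∧
      (ent q M.p M.S = (P : ℝ) * L / ((N : ℝ) - 1)) ∧
      (∀ 𝒫₀ : Finset (Fin K), 𝒫₀.card = P →
        (∑ n : Fin N, ent q M.p (M.A 𝒫₀ n)) = (N : ℝ) * P * L / ((N : ℝ) - 1)) := by
  have hK0 : 0 < K := by omega
  have hq2 : 2 ≤ q := hq.two_le
  have : NeZero q := ⟨by omega⟩
  obtain ⟨L, rfl⟩ : ∃ L, N = L + 1 := ⟨N - 1, by omega⟩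
  have hL : (L : ℝ) ≠ 0 := by
    have : L ≠ 0 := by omega
    exact_mod_cast this
  have hlog : Real.logb q (Fintype.card (Fin P → Fin q) : ℝ) = P := by
    simp only [Fintype.card_pi, Finset.prod_const, Finset.card_univ, Fintype.card_fin, Nat.cast_pow]
    rw [Real.logb_pow, Real.logb_self_eq_one (by exact_mod_cast hq2), mul_one]
  have hu := sch_unif_FSW L K P q
  have huF := unif_fst _ _ _ hu
  have huS := unif_fst _ _ _ (unif_snd _ _ _ hu)
  have huW := unif_snd _ _ _ (unif_snd _ _ _ hu)
  have hcard : (Fintype.card (Sp L K P q) : ℝ) ≠ 0 := by exact_mod_cast Fintype.card_ne_zero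
  refine ⟨L, by omega, sch L K P q hK0, ?_, ?_, ?_, ?_, ?_, ?_, ?_, ?_, ?_, ?_, ?_⟩
  · intro ω
    change (0 : ℝ) ≤ 1 / (Fintype.card (Sp L K P q) : ℝ)
    positivity
  · change ∑ ω : Sp L K P q, 1 / (Fintype.card (Sp L K P q) : ℝ) = 1
    rw [Finset.sum_const, Finset.card_univ, nsmul_eq_mul]
    field_simp
  · intro v
    have := huW v
    refine Eq.trans this ?_
    simp only [Fintype.card_pi, Finset.prod_const, Finset.card_univ, Fintype.card_fin, Nat.cast_pow]
    rw [← pow_mul, mul_comm]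
  · refine (ent_unif q _ _ hu).trans ?_
    rw [Fintype.card_prod, Fintype.card_prod, Nat.cast_mul, Nat.cast_mul, Real.logb_mul,
      Real.logb_mul, ← add_assoc]
    · exact congrArg₂ _ (congrArg₂ _ (ent_unif q _ _ huF).symm (ent_unif q _ _ huS).symm)
        (ent_unif q _ _ huW).symm
    all_goals first
      | exact Nat.cast_ne_zero.2 Fintype.card_ne_zero
      | exact mul_ne_zero (Nat.cast_ne_zero.2 Fintype.card_ne_zero)
          (Nat.cast_ne_zero.2 Fintype.card_ne_zero)
  · intro T hT
    exact cent_zero q _ _ _ (fun f n => qry (idx hK0 T) n f) (fun ω => rfl)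
  · intro T hT n
    exact cent_zero q _ _ _ (fun y => ans y.1 y.2.1 y.2.2) (fun ω => rfl)
  · intro T hT
    choose j hj using fun k : {x : Fin K // x ∈ T} => idx_surj (P := P) hK0 T hT k.1 k.2
    refine cent_zero q _ _ _ (fun y k l => y.1 l.succ (j k) - y.1 0 (j k)) ?_
    intro ω
    funext k l
    change ω.2.2 k.1 l = ans (qry (idx hK0 T) l.succ ω.1) ω.2.2 ω.2.1 (j k) -
      ans (qry (idx hK0 T) 0 ω.1) ω.2.2 ω.2.1 (j k)
    rw [ans_qry _ l.succ, hj]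
    simp
  · intro n T₁ T₂ _ _ v
    have key : ∀ T : Finset (Fin K), Function.Injective
        (fun ω : Sp L K P q => ((qry (idx hK0 T) n ω.1, ω.2.1, ω.2.2) : Sp L K P q)) := by
      rintro T ⟨f, s, w⟩ ⟨f', s', w'⟩ hab
      simp only [Prod.mk.injEq] at hab
      obtain ⟨h1, rfl, rfl⟩ := hab
      rw [qry_inj _ _ h1]
    exact (prob_comp_inj (1 / (Fintype.card (Sp L K P q) : ℝ))
      (fun ω : Sp L K P q => (ω.1, ans ω.1 ω.2.2 ω.2.1, ω.2.2, ω.2.1)) _ (key T₁) v).trans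
      (prob_comp_inj (1 / (Fintype.card (Sp L K P q) : ℝ))
      (fun ω : Sp L K P q => (ω.1, ans ω.1 ω.2.2 ω.2.1, ω.2.2, ω.2.1)) _ (key T₂) v).symm
  · intro T hT
    refine mi_zero q _ _ _ _ (fun y : (Fin P → Fin K → Fin L → Fin q) × (Fin P → Fin q) ×
        ({x // x ∈ T} → Fin L → Fin q) =>
      ((fun n => qry (idx hK0 T) n y.1), (fun (n : Fin (L + 1)) j => y.2.1 j +
        Fin.cases (motive := fun _ => Fin q) 0
          (fun l => y.2.2 ⟨idx hK0 T j, idx_mem hK0 T hT j⟩ l) n), y.1)) ?_ ?_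
      (sch_unif_joint L K P q (idx hK0 T) T)
    · rintro ⟨f, a, w⟩ ⟨f', a', w'⟩ hab
      have h2 : (fun (n : Fin (L + 1)) j => a j + Fin.cases (motive := fun _ => Fin q) 0
            (fun l => w ⟨idx hK0 T j, idx_mem hK0 T hT j⟩ l) n) =
          (fun (n : Fin (L + 1)) j => a' j + Fin.cases (motive := fun _ => Fin q) 0
            (fun l => w' ⟨idx hK0 T j, idx_mem hK0 T hT j⟩ l) n) :=
        congrArg (fun z => z.2.1) hab
      obtain rfl : f = f' := congrArg (fun z => z.2.2) hab
      obtain rfl : a = a' := by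
        funext j
        simpa using congrFun (congrFun h2 0) j
      have : w = w' := by
        funext ⟨k, hk⟩ l
        obtain ⟨j, rfl⟩ := idx_surj (P := P) hK0 T hT k hk
        simpa using congrFun (congrFun h2 l.succ) j
      rw [this]
    · intro ω
      refine Prod.ext rfl (Prod.ext ?_ rfl)
      funext n j
      exact ans_qry (idx hK0 T) n ω.1 ω.2.2 ω.2.1 j
  · refine (ent_unif q _ _ huS).trans ?_
    rw [hlog]
    push_cast
    rw [add_sub_cancel_right]
    field_simp
  · intro T hT
    have : ∀ n : Fin (L + 1), ent q (sch L K P q hK0).p ((sch L K P q hK0).A T n) = P :=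
      fun n => (ent_unif q _ _ (sch_unif_A L K P q (idx hK0 T) n)).trans hlog
    rw [Finset.sum_congr rfl (fun n _ => this n)]
    rw [Finset.sum_const, Finset.card_univ, Fintype.card_fin, nsmul_eq_mul]
    push_cast
    rw [add_sub_cancel_right]
    field_simp

end MMSPIR
end
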